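/- Let Q(z) = ∑_{j=0}^{n} c_j z^j be a complex polynomial of degree n ≥ 1 all of whose zeros lie in |z| ≤ 1. Then for every z with |z| = 1, |Q′(z)| ≥ (1/2)·(n + (|c_n| − |c_0|)/(|c_n| + |c_0|))·|Q(z)|. -/

import Mathlib

open Polynomial Metric

lemma aux_re (z w : ℂ) (hz : ‖z‖ = 1) (hw : ‖w‖ ≤ 1) (hzw : z ≠ w) :
    1 / (1 + ‖w‖) ≤ (z * (1 / (z - w))).re := by
  have h0 : 0 < Complex.normSq (z - w) := Complex.normSq_pos.2 (sub_ne_zero.2 hzw)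
  have hr := norm_nonneg w
  have h1 : z.re * z.re + z.im * z.im = 1 := by
    rw [← Complex.normSq_apply, Complex.normSq_eq_norm_sq, hz]; norm_num
  have h2 : w.re * w.re + w.im * w.im = ‖w‖ ^ 2 := by
    rw [← Complex.normSq_apply, Complex.normSq_eq_norm_sq]
  have h3 : -‖w‖ ≤ z.re * w.re + z.im * w.im := by
    apply (abs_le.1 (abs_le_of_sq_le_sq (a := z.re * w.re + z.im * w.im) _ hr)).1
    have : ‖w‖ ^ 2 = (z.re * z.re + z.im * z.im) * (w.re * w.re + w.im * w.im) := by
      rw [h1, h2, one_mul]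
    rw [this]
    nlinarith [sq_nonneg (z.re * w.im - z.im * w.re)]
  have h4 : (z * (1 / (z - w))).re
      = (1 - (z.re * w.re + z.im * w.im)) / Complex.normSq (z - w) := by
    rw [one_div, Complex.mul_re, Complex.inv_re, Complex.inv_im]
    simp only [Complex.sub_re, Complex.sub_im]
    rw [← h1]; ring
  rw [h4, div_le_div_iff₀ (by linarith) h0, Complex.normSq_apply]
  simp only [Complex.sub_re, Complex.sub_im]
  nlinarith [mul_nonneg (by linarith : 0 ≤ ‖w‖ + (z.re * w.re + z.im * w.im))
    (by linarith : 0 ≤ 1 - ‖w‖)]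

lemma aux_real (a p : ℝ) (ha : 0 ≤ a) (ha1 : a ≤ 1) (hp : 0 ≤ p) (hp1 : p ≤ 1) :
    (1 - a * p) / (1 + a * p) ≤ (1 - a) / (1 + a) + (1 - p) / (1 + p) := by
  have hap : 0 ≤ a * p := mul_nonneg ha hp
  have hap1 : a * p ≤ 1 := mul_le_one₀ ha1 hp hp1
  have : (1 - a) / (1 + a) + (1 - p) / (1 + p) - (1 - a * p) / (1 + a * p)
      = (1 - a) * (1 - p) * (1 - a * p) / ((1 + a) * (1 + p) * (1 + a * p)) := by
    field_simp
    ring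
  have h2 : 0 ≤ (1 - a) * (1 - p) * (1 - a * p) / ((1 + a) * (1 + p) * (1 + a * p)) := by
    have := sub_nonneg.2 ha1
    have := sub_nonneg.2 hp1
    have := sub_nonneg.2 hap1
    positivity
  linarith

lemma aux_sum (z : ℂ) (hz : ‖z‖ = 1) (s : Multiset ℂ) :
    (∀ w ∈ s, ‖w‖ ≤ 1 ∧ z ≠ w) →
    ‖s.prod‖ ≤ 1 ∧
    (1 / 2) * ((s.card : ℝ) + (1 - ‖s.prod‖) / (1 + ‖s.prod‖)) ≤
      (z * (s.map (fun w => 1 / (z - w))).sum).re := by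
  induction s using Multiset.induction_on with
  | empty => intro _; simp
  | cons a s ih =>
    intro h
    obtain ⟨hp, hs⟩ := ih (fun w hw => h w (Multiset.mem_cons_of_mem hw))
    obtain ⟨ha, hza⟩ := h a (Multiset.mem_cons_self a s)
    have h1 := aux_re z a hz ha hza
    have h2 := aux_real ‖a‖ ‖s.prod‖ (norm_nonneg _) ha (norm_nonneg _) hp
    have h3 : (1 - ‖a‖) / (1 + ‖a‖) = 2 * (1 / (1 + ‖a‖)) - 1 := by
      have := norm_nonneg a
      field_simp
      ring
    rw [Multiset.prod_cons, norm_mul, Multiset.map_cons, Multiset.sum_cons, mul_add z,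
      Complex.add_re, Multiset.card_cons]
    refine ⟨mul_le_one₀ ha (norm_nonneg _) hp, ?_⟩
    push_cast
    linarith

theorem stmt_18 (n : ℕ) (hn : 1 ≤ n) (Q : Polynomial ℂ) (hdeg : Q.natDegree = n)
    (hroots : ∀ w : ℂ, Q.IsRoot w → ‖w‖ ≤ 1) :
    ∀ z : ℂ, ‖z‖ = 1 →
      ‖(Polynomial.derivative Q).eval z‖ ≥
        (1 / 2) *
          ((n : ℝ) + (‖Q.coeff n‖ - ‖Q.coeff 0‖) /
              (‖Q.coeff n‖ + ‖Q.coeff 0‖)) *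
          ‖Q.eval z‖ := by
  intro z hz
  by_cases hQz : Q.eval z = 0
  · simp [hQz]
  have hQ0 : Q ≠ 0 := by rintro rfl; simp at hQz
  have hsp : Q.Splits := IsAlgClosed.splits Q
  have hcard : Q.roots.card = n := by rw [← hdeg, hsp.natDegree_eq_card_roots]
  have hc0 : ‖Q.coeff 0‖ = ‖Q.coeff n‖ * ‖Q.roots.prod‖ := by
    rw [hsp.coeff_zero_eq_leadingCoeff_mul_prod_roots]
    simp [Polynomial.leadingCoeff, hdeg]
  have hcn : 0 < ‖Q.coeff n‖ := by
    rw [norm_pos_iff, ← hdeg]; exact Polynomial.leadingCoeff_ne_zero.2 hQ0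
  have hratio : (‖Q.coeff n‖ - ‖Q.coeff 0‖) / (‖Q.coeff n‖ + ‖Q.coeff 0‖)
      = (1 - ‖Q.roots.prod‖) / (1 + ‖Q.roots.prod‖) := by
    rw [hc0, ← mul_one_sub, ← mul_one_add, mul_div_mul_left _ _ hcn.ne']
  have key := (aux_sum z hz Q.roots (fun w hw => by
    have hr := (Polynomial.mem_roots hQ0).1 hw
    refine ⟨hroots w hr, ?_⟩
    rintro rfl
    exact hQz hr)).2
  rw [← hsp.eval_derivative_div_eval_of_ne_zero hQz, hcard, ← hratio] at key
  have h5 := key.trans (Complex.re_le_norm _)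
  rw [norm_mul, hz, one_mul, norm_div, le_div_iff₀ (norm_pos_iff.2 hQz)] at h5
  exact h5
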